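/- Let V be a finite-dimensional real inner product space, let V = V₁ ⊕ … ⊕ V_k be an orthogonal direct-sum decomposition, and let G be a finite subgroup of O(V) that leaves each summand V_i invariant and is generated by its rotations. Suppose that every rotation in G restricts to the identity on all but one of the summands V₁,…,V_k. Then, writing G_i = {g ∈ G | g restricts to the identity on V_j for all j ≠ i}, the group G is the internal direct product of the subgroups G₁,…,G_k; in particular G is isomorphic to G₁ × … × G_k. -/

import Mathlib

/-!
Since the `Vs i` span `V`, an isometry is determined by its restrictions to them
(`isometry_ext_of_internal`). Elements of `kernelAway G Vs i` and `kernelAway G Vs j` with `i ≠ j`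
commute, as one can check on each summand (`kernelAway_commute`). An element of the join of the
`kernelAway G Vs j`, `j ≠ i`, fixes `Vs i` pointwise; if it also lies in `kernelAway G Vs i`, it is
trivial (`kernelAway_iSupIndep`). Each rotation of `G` lies in some `kernelAway G Vs i` because it is
of the first kind, so these subgroups generate `G` (`kernelAway_iSup`). Commuting, independent
subgroups generating `G` form an internal direct product, via `Subgroup.noncommPiCoprod`.
-/


open Module

section Defs

variable {V : Type} [NormedAddCommGroup V] [InnerProductSpace ℝ V]

/-- The fixed-point subspace of a linear isometry equivalence. -/
noncomputable def fixedSubspace (g : V ≃ₗᵢ[ℝ] V) : Submodule ℝ V :=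
  LinearMap.ker ((g.toLinearEquiv : V →ₗ[ℝ] V) - LinearMap.id)

/-- A rotation: an orthogonal transformation whose fixed-point subspace has codimension 2. -/
def IsRotation (g : V ≃ₗᵢ[ℝ] V) : Prop :=
  finrank ℝ V = finrank ℝ (fixedSubspace g) + 2

/-- The subgroup of elements of `G` acting as the identity on every summand `Vs j`, `j ≠ i`. -/
def kernelAway (G : Subgroup (V ≃ₗᵢ[ℝ] V)) {k : ℕ} (Vs : Fin k → Submodule ℝ V)
    (i : Fin k) : Subgroup (V ≃ₗᵢ[ℝ] V) where
  carrier := {g | g ∈ G ∧ ∀ j, j ≠ i → ∀ v ∈ Vs j, g v = v}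
  one_mem' := ⟨G.one_mem, fun _ _ _ _ => rfl⟩
  mul_mem' := by
    rintro a b ⟨haG, ha⟩ ⟨hbG, hb⟩
    refine ⟨G.mul_mem haG hbG, fun j hj v hv => ?_⟩
    show a (b v) = v
    rw [hb j hj v hv, ha j hj v hv]
  inv_mem' := by
    rintro a ⟨haG, ha⟩
    refine ⟨G.inv_mem haG, fun j hj v hv => ?_⟩
    have h1 := ha j hj v hv
    calc (a⁻¹ : V ≃ₗᵢ[ℝ] V) v = a⁻¹ (a v) := by rw [h1]
    _ = v := a.symm_apply_apply v

end Defs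

section Lemmas

variable {V : Type} [NormedAddCommGroup V] [InnerProductSpace ℝ V]

theorem isometry_ext_of_internal {k : ℕ} {Vs : Fin k → Submodule ℝ V}
    (hinternal : DirectSum.IsInternal Vs) {a b : V ≃ₗᵢ[ℝ] V}
    (h : ∀ i, ∀ v ∈ Vs i, a v = b v) : a = b := by
  ext v
  have hle : (⨆ i, Vs i) ≤
      LinearMap.eqLocus (a.toLinearEquiv : V →ₗ[ℝ] V) (b.toLinearEquiv : V →ₗ[ℝ] V) :=
    iSup_le fun i v hv => h i v hv
  rw [hinternal.submodule_iSup_eq_top] at hle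
  exact hle (Submodule.mem_top (x := v))

/-- On `Vs i` the second factor acts trivially; on any other summand the first one does. -/
theorem kernelAway_commute {k : ℕ} {Vs : Fin k → Submodule ℝ V}
    (hinternal : DirectSum.IsInternal Vs) {G : Subgroup (V ≃ₗᵢ[ℝ] V)}
    (hinv : ∀ g ∈ G, ∀ i, ∀ v ∈ Vs i, g v ∈ Vs i) :
    Pairwise fun i j : Fin k => ∀ x y : V ≃ₗᵢ[ℝ] V,
      x ∈ kernelAway G Vs i → y ∈ kernelAway G Vs j → Commute x y := by
  rintro i j hij x y ⟨hxG, hx⟩ ⟨hyG, hy⟩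
  refine isometry_ext_of_internal hinternal fun l v hv => ?_
  change x (y v) = y (x v)
  by_cases hl : l = i
  · subst hl
    rw [hy l hij v hv, hy l hij _ (hinv x hxG l v hv)]
  · rw [hx l hl v hv, hx l hl _ (hinv y hyG l v hv)]

/-- The subgroup of linear isometries fixing the vector `v`. -/
def pointStabilizer (v : V) : Subgroup (V ≃ₗᵢ[ℝ] V) where
  carrier := {g | g v = v}
  one_mem' := rfl
  mul_mem' := by
    intro a b (ha : a v = v) (hb : b v = v)
    change a (b v) = v
    rw [hb, ha]
  inv_mem' := by
    intro a (ha : a v = v)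
    exact (LinearIsometryEquiv.symm_apply_eq a).2 ha.symm

theorem kernelAway_iSupIndep {k : ℕ} {Vs : Fin k → Submodule ℝ V}
    (hinternal : DirectSum.IsInternal Vs) (G : Subgroup (V ≃ₗᵢ[ℝ] V)) :
    iSupIndep (kernelAway G Vs) := by
  intro i
  rw [Subgroup.disjoint_def]
  intro x hx hx'
  have hfix : ∀ v ∈ Vs i, x v = v := by
    intro v hv
    have hle : (⨆ j, ⨆ (_ : j ≠ i), kernelAway G Vs j) ≤ pointStabilizer v :=
      iSup₂_le fun j hj y hy => hy.2 i hj.symm v hv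
    exact hle hx'
  refine isometry_ext_of_internal hinternal fun l v hv => ?_
  by_cases hl : l = i
  · subst hl
    exact hfix v hv
  · exact hx.2 l hl v hv

theorem kernelAway_iSup {k : ℕ} {Vs : Fin k → Submodule ℝ V} {G : Subgroup (V ≃ₗᵢ[ℝ] V)}
    (hgen : G = Subgroup.closure {g | g ∈ G ∧ IsRotation g})
    (hfirst : ∀ g ∈ G, IsRotation g → ∃ i, ∀ j, j ≠ i → ∀ v ∈ Vs j, g v = v) :
    (⨆ i, kernelAway G Vs i) = G := by
  refine le_antisymm (iSup_le fun i x hx => hx.1) ?_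
  conv_lhs => rw [hgen]
  rw [Subgroup.closure_le]
  rintro g ⟨hgG, hg⟩
  obtain ⟨i, hi⟩ := hfirst g hgG hg
  exact Subgroup.mem_iSup_of_mem i ⟨hgG, hi⟩

/-- The order-free product over `Fin k` of commuting factors is the product taken in the order
`0, 1, …, k - 1`. -/
theorem noncommPiCoprod_eq_prod_ofFn {M : Type*} [Group M] {k : ℕ} {H : Fin k → Subgroup M}
    (hcomm : Pairwise fun i j : Fin k => ∀ x y : M, x ∈ H i → y ∈ H j → Commute x y)
    (f : ∀ i, H i) :
    Subgroup.noncommPiCoprod hcomm f = (List.ofFn fun i => (f i : M)).prod := by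
  rw [Subgroup.noncommPiCoprod_apply, List.ofFn_eq_map]
  exact Multiset.noncommProd_coe ((List.finRange k).map fun i => (f i : M)) _

end Lemmas

open RealInnerProductSpace in
/-- If a finite group generated by rotations preserves each summand of an orthogonal
decomposition and every rotation in it is of the first kind (identity on all but one
summand), then the group is the internal direct product of the subgroups `Gᵢ` of elements
supported on a single summand. -/
theorem internal_direct_product_of_rotations_first_kind {V : Type} [NormedAddCommGroup V]
    [InnerProductSpace ℝ V] [FiniteDimensional ℝ V]
    (k : ℕ) (Vs : Fin k → Submodule ℝ V)
    (hinternal : DirectSum.IsInternal Vs)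
    (horth : ∀ i j, i ≠ j → ∀ v ∈ Vs i, ∀ w ∈ Vs j, ⟪v, w⟫ = 0)
    (G : Subgroup (V ≃ₗᵢ[ℝ] V)) (hGfin : Finite G)
    (hinv : ∀ g ∈ G, ∀ i, ∀ v ∈ Vs i, g v ∈ Vs i)
    (hgen : G = Subgroup.closure {g | g ∈ G ∧ IsRotation g})
    (hfirst : ∀ g ∈ G, IsRotation g → ∃ i, ∀ j, j ≠ i → ∀ v ∈ Vs j, g v = v) :
    Function.Injective
        (fun f : (∀ i, kernelAway G Vs i) =>
          (List.ofFn fun i => ((f i : (kernelAway G Vs i)) : V ≃ₗᵢ[ℝ] V)).prod) ∧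
      Set.range
        (fun f : (∀ i, kernelAway G Vs i) =>
          (List.ofFn fun i => ((f i : (kernelAway G Vs i)) : V ≃ₗᵢ[ℝ] V)).prod) =
        (G : Set (V ≃ₗᵢ[ℝ] V)) ∧
      Nonempty (G ≃* (∀ i, kernelAway G Vs i)) := by
  have hcomm := kernelAway_commute hinternal hinv
  have heq : (fun f : (∀ i, kernelAway G Vs i) =>
      (List.ofFn fun i => ((f i : (kernelAway G Vs i)) : V ≃ₗᵢ[ℝ] V)).prod) =
      Subgroup.noncommPiCoprod hcomm :=
    funext fun f => (noncommPiCoprod_eq_prod_ofFn hcomm f).symm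
  have hinj : Function.Injective (Subgroup.noncommPiCoprod hcomm) :=
    Subgroup.injective_noncommPiCoprod_of_iSupIndep (hcomm := hcomm) (kernelAway_iSupIndep hinternal G)
  have hrange : (Subgroup.noncommPiCoprod hcomm).range = G :=
    (Subgroup.noncommPiCoprod_range (hcomm := hcomm)).trans (kernelAway_iSup hgen hfirst)
  rw [heq]
  refine ⟨hinj, ?_, ⟨?_⟩⟩
  · rw [← MonoidHom.coe_range, hrange]
  · exact ((MonoidHom.ofInjective hinj).trans (MulEquiv.subgroupCongr hrange)).symm
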